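/- Let n ≥ 2 and 1 ≤ k ≤ n−1. The number of decorated ordered set partitions ((S_1,…,S_ℓ),(s_1,…,s_ℓ)) of type Δ_{k,n} with 1 ∈ S_1 and at least two blocks (ℓ ≥ 2) equals A_{k−1,n−1} − 1, where A_{k−1,n−1} is the number of permutations σ of {1,…,n−1} having exactly k−1 descents (a descent of σ is an index i ∈ {1,…,n−2} with σ(i) > σ(i+1)). Since decorated ordered set partitions with 1 ∈ S_1 are exactly the representatives of equivalence classes under cyclic rotation of blocks, this says there are exactly A_{k−1,n−1} − 1 hypersimplicial blades of type Δ_{k,n}. -/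

import Mathlib

open Finset

/-- A decorated ordered set partition of type `Δ_{k,n}`: an ordered set partition
`(S_1,…,S_ℓ)` of `{1,…,n}` into nonempty blocks, with integer weights
`1 ≤ s_i ≤ |S_i| − 1` summing to `k`. -/
structure DOSP (n k : ℕ) where
  len : ℕ
  len_pos : 0 < len
  S : Fin len → Finset (Fin n)
  wt : Fin len → ℕ
  blocks_nonempty : ∀ i, (S i).Nonempty
  blocks_disjoint : ∀ i j, i ≠ j → Disjoint (S i) (S j)
  blocks_cover : ∀ x : Fin n, ∃ i, x ∈ S i
  wt_lower : ∀ i, 1 ≤ wt i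
  wt_upper : ∀ i, wt i ≤ (S i).card - 1
  wt_sum : ∑ i, wt i = k

section ExponentialCoefficients

open PowerSeries

variable {R : Type*} [CommRing R]

/-- The coefficient of `X ^ n / n!` in a formal power series. -/
noncomputable def egfCoeff (n : ℕ) (F : PowerSeries R) : R := (n.factorial : R) * coeff n F

lemma egfCoeff_succ (n : ℕ) (F : PowerSeries R) :
    egfCoeff (n + 1) F = egfCoeff n (derivative R F) := by
  simp only [egfCoeff, coeff_derivative, Nat.factorial_succ]
  push_cast
  ring

lemma egfCoeff_sum {ι : Type*} (s : Finset ι) (n : ℕ) (F : ι → PowerSeries R) :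
    egfCoeff n (∑ i ∈ s, F i) = ∑ i ∈ s, egfCoeff n (F i) := by
  simp [egfCoeff, mul_sum]

lemma derivative_C_mul (a : R) (F : PowerSeries R) :
    derivative R (C a * F) = C a * derivative R F := by
  simp [Derivation.leibniz]

lemma derivative_sub_C_mul_add_C (a b : R) (F G : PowerSeries R) :
    derivative R (F - C a * G + C b) = derivative R F - C a * derivative R G := by
  simp

lemma derivative_prod_eq_sum_update {ι : Type*} [DecidableEq ι] (s : Finset ι)
    (W : ι → PowerSeries R) :
    derivative R (∏ i ∈ s, W i) =
      ∑ j ∈ s, ∏ i ∈ s, Function.update W j (derivative R (W j)) i := by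
  induction s using Finset.induction_on with
  | empty => simp
  | insert a s ha ih =>
    rw [prod_insert ha, Derivation.leibniz, ih, sum_insert ha, prod_insert ha,
      Function.update_self, smul_eq_mul, smul_eq_mul, add_comm, mul_comm (∏ i ∈ s, W i)]
    congr 1
    · congr 1
      refine prod_congr rfl fun i hi => ?_
      rw [Function.update_of_ne (ne_of_mem_of_not_mem hi ha)]
    · rw [mul_sum]
      refine sum_congr rfl fun j hj => ?_
      rw [prod_insert ha, Function.update_of_ne (ne_of_mem_of_not_mem hj ha).symm]

lemma prod_egfCoeff_fiber_cons {ι : Type*} [Fintype ι] [DecidableEq ι] {n : ℕ} (j : ι)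
    (f : Fin n → ι) (W : ι → PowerSeries R) :
    ∏ i, egfCoeff #{x | (Fin.cons j f : Fin (n + 1) → ι) x = i} (W i) =
      ∏ i, egfCoeff #{x | f x = i} (Function.update W j (derivative R (W j)) i) := by
  refine prod_congr rfl fun i _ => ?_
  rw [Fin.card_filter_univ_succ]
  by_cases h : j = i
  · subst h
    simp [egfCoeff_succ]
  · simp [h, Function.update_of_ne (Ne.symm h)]

/-- Product formula for exponential generating functions: the functions `Fin n → ι`, weighted by
the sizes of their fibers, are counted by the product of the weight series. -/
lemma sum_prod_egfCoeff_fiber {ι : Type*} [Fintype ι] [DecidableEq ι] (n : ℕ)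
    (W : ι → PowerSeries R) :
    ∑ f : Fin n → ι, ∏ i, egfCoeff #{x | f x = i} (W i) = egfCoeff n (∏ i, W i) := by
  induction n generalizing W with
  | zero => simp [egfCoeff, coeff_zero_eq_constantCoeff, map_prod]
  | succ n ih =>
    rw [egfCoeff_succ, derivative_prod_eq_sum_update, egfCoeff_sum,
      ← (Fin.consEquiv fun _ => ι).sum_comp, Fintype.sum_prod_type]
    refine sum_congr rfl fun j _ => ?_
    rw [← ih]
    exact sum_congr rfl fun f _ => prod_egfCoeff_fiber_cons j f W

lemma sum_prod_egfCoeff_fiber_of_apply_zero (n r : ℕ) (F : PowerSeries R) :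
    ∑ f : Fin (n + 1) → Fin (r + 1) with (f 0 : ℕ) = 0, ∏ i, egfCoeff #{x | f x = i} F =
      egfCoeff n (derivative R F * F ^ r) := by
  rw [sum_filter, ← (Fin.consEquiv fun _ => Fin (r + 1)).sum_comp, Fintype.sum_prod_type,
    sum_eq_single 0]
  · have h : derivative R F * F ^ r =
        ∏ i, Function.update (fun _ : Fin (r + 1) => F) 0 (derivative R F) i := by
      simp [Fin.prod_univ_succ]
    rw [h, ← sum_prod_egfCoeff_fiber]
    refine sum_congr rfl fun f _ => ?_
    simpa using prod_egfCoeff_fiber_cons 0 f fun _ => F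
  · intro j _ hj
    refine sum_eq_zero fun f _ => ?_
    exact if_neg fun h => hj (Fin.ext h)
  · simp

end ExponentialCoefficients

section Descents

/-- The number of descents of a permutation. -/
def descentCount {n : ℕ} (σ : Equiv.Perm (Fin n)) : ℕ :=
  #{i : Fin n | ∃ j : Fin n, (j : ℕ) = (i : ℕ) + 1 ∧ σ j < σ i}

/-- The permutation with first value `p` whose remaining values are in the same relative order as
those of `τ`. -/
def consPerm {n : ℕ} (p : Fin (n + 1)) (τ : Equiv.Perm (Fin n)) : Equiv.Perm (Fin (n + 1)) :=
  (finSuccEquiv' 0).trans ((Equiv.optionCongr τ).trans (finSuccEquiv' p).symm)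

@[simp]
lemma consPerm_zero {n : ℕ} (p : Fin (n + 1)) (τ : Equiv.Perm (Fin n)) : consPerm p τ 0 = p := by
  simp [consPerm]

@[simp]
lemma consPerm_succ {n : ℕ} (p : Fin (n + 1)) (τ : Equiv.Perm (Fin n)) (i : Fin n) :
    consPerm p τ i.succ = p.succAbove (τ i) := by
  simp [consPerm, finSuccEquiv'_zero]

lemma consPerm_bijective (n : ℕ) : Function.Bijective
    fun x : Fin (n + 1) × Equiv.Perm (Fin n) => consPerm x.1 x.2 := by
  rw [Fintype.bijective_iff_injective_and_card]
  constructor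
  · rintro ⟨p, τ⟩ ⟨q, ρ⟩ h
    have h0 : p = q := by simpa using DFunLike.congr_fun h 0
    subst h0
    refine Prod.ext rfl (Equiv.ext fun i => ?_)
    simpa using DFunLike.congr_fun h i.succ
  · simp [Fintype.card_perm, Nat.factorial_succ]

lemma descentCount_consPerm_succ {n : ℕ} (p : Fin (n + 2)) (τ : Equiv.Perm (Fin (n + 1))) :
    descentCount (consPerm p τ) = (if (τ 0 : ℕ) < p then 1 else 0) + descentCount τ := by
  have h0 : (∃ j : Fin (n + 2), (j : ℕ) = ((0 : Fin (n + 2)) : ℕ) + 1 ∧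
      consPerm p τ j < consPerm p τ 0) ↔ (τ 0 : ℕ) < p := by
    have h1 : p.succAbove (τ 0) < p ↔ (τ 0 : ℕ) < p := by
      rw [Fin.succAbove_lt_iff_castSucc_lt, Fin.lt_def, Fin.val_castSucc]
    rw [Fin.exists_fin_succ]
    simp [h1]
  have hs (i : Fin (n + 1)) : (∃ j : Fin (n + 2), (j : ℕ) = (i.succ : ℕ) + 1 ∧
      consPerm p τ j < consPerm p τ i.succ) ↔
      ∃ j : Fin (n + 1), (j : ℕ) = (i : ℕ) + 1 ∧ τ j < τ i := by
    rw [Fin.exists_fin_succ]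
    simp
  simp only [descentCount]
  rw [Fin.card_filter_univ_succ']
  simp only [h0, hs]

open Polynomial

/-- The Eulerian polynomial `∑ σ, X ^ des σ`, the sum being over the permutations of `Fin n`. -/
noncomputable def eulerianPoly (n : ℕ) : ℚ[X] := ∑ σ : Equiv.Perm (Fin n), X ^ descentCount σ

/-- The descent polynomial of the permutations of `Fin (n + 1)` with first value `j`. -/
noncomputable def descentPolyFirst : ℕ → ℕ → ℚ[X]
  | 0, _ => 1
  | n + 1, j => ∑ q ∈ range (n + 1), descentPolyFirst n q * if q < j then X else 1

lemma sum_consPerm_eq_descentPolyFirst (n : ℕ) (p : Fin (n + 1)) :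
    ∑ τ : Equiv.Perm (Fin n), (X : ℚ[X]) ^ descentCount (consPerm p τ) =
      descentPolyFirst n p := by
  induction n with
  | zero => simp [descentPolyFirst, descentCount]
  | succ n ih =>
    rw [← (Equiv.ofBijective _ (consPerm_bijective n)).sum_comp, Fintype.sum_prod_type,
      descentPolyFirst, sum_range]
    refine sum_congr rfl fun q _ => ?_
    rw [← ih, sum_mul]
    refine sum_congr rfl fun ρ _ => ?_
    rw [descentCount_consPerm_succ, pow_add, mul_comm]
    simp [apply_ite (fun m => (X : ℚ[X]) ^ m)]

lemma eulerianPoly_eq_descentPolyFirst_zero (n : ℕ) :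
    eulerianPoly n = descentPolyFirst n 0 := by
  cases n with
  | zero => simp [descentPolyFirst, descentCount, eulerianPoly]
  | succ n =>
    rw [eulerianPoly, ← (Equiv.ofBijective _ (consPerm_bijective n)).sum_comp,
      Fintype.sum_prod_type, descentPolyFirst, sum_range]
    exact sum_congr rfl fun q _ => by simp [← sum_consPerm_eq_descentPolyFirst]

lemma descentPolyFirst_succ_succ {n j : ℕ} (h : j ≤ n) :
    descentPolyFirst (n + 1) (j + 1) =
      descentPolyFirst (n + 1) j + (X - 1) * descentPolyFirst n j := by
  have hj : (X - 1) * descentPolyFirst n j =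
      ∑ q ∈ range (n + 1), if q = j then (X - 1) * descentPolyFirst n q else 0 := by
    rw [sum_ite_eq', if_pos (mem_range.2 (by omega))]
  rw [hj, descentPolyFirst, descentPolyFirst, ← sum_add_distrib]
  refine sum_congr rfl fun q _ => ?_
  rcases lt_trichotomy q j with hq | rfl | hq
  · simp [hq, hq.ne, hq.trans (Nat.lt_succ_self j)]
  · simp; ring
  · simp [hq.ne', hq.not_gt, show ¬ q < j + 1 by omega]

lemma descentPolyFirst_self_succ (n : ℕ) :
    descentPolyFirst (n + 1) (n + 1) = X * descentPolyFirst (n + 1) 0 := by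
  rw [descentPolyFirst, descentPolyFirst, mul_sum]
  refine sum_congr rfl fun q hq => ?_
  rw [if_pos (mem_range.1 hq)]
  simp [mul_comm]

lemma descentPolyFirst_add (j m : ℕ) :
    descentPolyFirst (m + j) j =
      ∑ x ∈ antidiagonal j, (j.choose x.1 : ℚ[X]) * ((X - 1) ^ x.1 * eulerianPoly (m + x.2)) := by
  induction j generalizing m with
  | zero => simp [eulerianPoly_eq_descentPolyFirst_zero]
  | succ j ih =>
    rw [sum_antidiagonal_choose_succ_mul fun a b => (X - 1) ^ a * eulerianPoly (m + b),
      ← add_assoc, descentPolyFirst_succ_succ (Nat.le_add_left j m), ih, mul_sum,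
      show m + j + 1 = (m + 1) + j by omega, ih]
    refine congrArg₂ (· + ·) ?_ ?_
    · exact sum_congr rfl fun x _ => by rw [add_assoc, add_comm 1]
    · refine sum_congr rfl fun x hx => ?_
      rw [Nat.choose_symm_of_eq_add (mem_antidiagonal.1 hx).symm]
      ring

lemma X_mul_eulerianPoly {n : ℕ} (hn : n ≠ 0) :
    X * eulerianPoly n =
      ∑ x ∈ antidiagonal n, (n.choose x.1 : ℚ[X]) * ((X - 1) ^ x.1 * eulerianPoly x.2) := by
  obtain ⟨n, rfl⟩ := Nat.exists_eq_succ_of_ne_zero hn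
  simpa [eulerianPoly_eq_descentPolyFirst_zero, descentPolyFirst_self_succ] using
    descentPolyFirst_add (n + 1) 0

end Descents

section GeneratingFunctions

open PowerSeries

open scoped Polynomial

/-- The generating polynomial of the weights allowed on a block of size `m`. -/
noncomputable def blockPoly (m : ℕ) : ℚ[X] := ∑ s ∈ Icc 1 (m - 1), Polynomial.X ^ s

lemma blockPoly_succ (m : ℕ) :
    (Polynomial.X - 1) * blockPoly (m + 1) = Polynomial.X ^ (m + 1) - Polynomial.X := by
  induction m with
  | zero => simp [blockPoly]
  | succ m ih =>
    have h : blockPoly (m + 1 + 1) = blockPoly (m + 1) + Polynomial.X ^ (m + 1) := by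
      simp [blockPoly, sum_Icc_succ_top]
    rw [h, mul_add, ih]
    ring

/-- The power series `∑ aₙ xⁿ / n!`. -/
noncomputable def egf (a : ℕ → ℚ[X]) : PowerSeries ℚ[X] :=
  PowerSeries.mk fun n => algebraMap ℚ ℚ[X] (1 / n.factorial) * a n

lemma natCast_factorial_mul_algebraMap (n : ℕ) :
    (n.factorial : ℚ[X]) * algebraMap ℚ ℚ[X] (1 / n.factorial) = 1 := by
  rw [← map_natCast (algebraMap ℚ ℚ[X]), ← map_mul,
    mul_one_div_cancel (Nat.cast_ne_zero.2 n.factorial_ne_zero), map_one]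

@[simp]
lemma egfCoeff_egf (n : ℕ) (a : ℕ → ℚ[X]) : egfCoeff n (egf a) = a n := by
  rw [egfCoeff, egf, PowerSeries.coeff_mk, ← mul_assoc, natCast_factorial_mul_algebraMap, one_mul]

lemma algebraMap_factorial_mul {n i j : ℕ} (h : i + j = n) :
    algebraMap ℚ ℚ[X] (1 / i.factorial) * algebraMap ℚ ℚ[X] (1 / j.factorial) =
      algebraMap ℚ ℚ[X] (1 / n.factorial) * (n.choose i : ℚ[X]) := by
  rw [← map_natCast (algebraMap ℚ ℚ[X]), ← map_mul, ← map_mul]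
  subst h
  congr 1
  have hi := i.factorial_ne_zero
  have hj := j.factorial_ne_zero
  have hn := (i + j).factorial_ne_zero
  have h := Nat.add_choose_mul_factorial_mul_factorial i j
  rw [← Nat.choose_symm_add] at h
  field_simp
  rw [← h]
  push_cast
  ring

/-- The functional equation of the generating function of the Eulerian polynomials. -/
lemma rescale_exp_mul_egf_eulerianPoly :
    rescale (Polynomial.X - 1 : ℚ[X]) (exp ℚ[X]) * egf eulerianPoly =
      C (Polynomial.X : ℚ[X]) * egf eulerianPoly - C (Polynomial.X - 1 : ℚ[X]) := by
  ext1 n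
  rw [map_sub, PowerSeries.coeff_C_mul, PowerSeries.coeff_mul]
  simp only [coeff_rescale, coeff_exp, egf, coeff_mk]
  rcases eq_or_ne n 0 with rfl | hn
  · have h : eulerianPoly 0 = 1 := by simp [eulerianPoly, descentCount]
    simp [h]
  · rw [PowerSeries.coeff_C, if_neg hn, sub_zero, mul_left_comm, X_mul_eulerianPoly hn, mul_sum]
    refine sum_congr rfl fun x hx => ?_
    rw [← mul_assoc (algebraMap _ _ _), ← algebraMap_factorial_mul (mem_antidiagonal.1 hx)]
    ring

lemma C_mul_egf_blockPoly :
    C (Polynomial.X - 1 : ℚ[X]) * egf blockPoly =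
      rescale (Polynomial.X : ℚ[X]) (exp ℚ[X]) - C (Polynomial.X : ℚ[X]) * exp ℚ[X]
        + C (Polynomial.X - 1 : ℚ[X]) := by
  ext1 n
  rw [PowerSeries.coeff_C_mul, map_add, map_sub, PowerSeries.coeff_C_mul, coeff_rescale,
    coeff_exp, egf, coeff_mk, mul_left_comm, PowerSeries.coeff_C]
  cases n with
  | zero => simp [blockPoly]
  | succ n =>
    rw [blockPoly_succ, if_neg n.succ_ne_zero]
    ring

lemma derivative_rescale_exp (a : ℚ[X]) :
    derivative ℚ[X] (rescale a (exp ℚ[X])) = C a * rescale a (exp ℚ[X]) := by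
  ext1 n
  rw [coeff_derivative, PowerSeries.coeff_C_mul, coeff_rescale, coeff_rescale, coeff_exp, coeff_exp]
  have h : algebraMap ℚ ℚ[X] (1 / (n + 1).factorial) * ((n : ℚ[X]) + 1) =
      algebraMap ℚ ℚ[X] (1 / n.factorial) := by
    have hn : (n : ℚ[X]) + 1 = algebraMap ℚ ℚ[X] (n + 1) := by simp
    rw [hn, ← map_mul, Nat.factorial_succ]
    congr 1
    have := n.factorial_ne_zero
    push_cast
    field_simp
  rw [← h]
  ring

/-- If `A` is the series of the Eulerian polynomials and `B` that of the block weights, then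
`t (A - 1) (1 - B)` is the derivative of `B`. -/
lemma egf_eulerianPoly_mul_one_sub :
    C (Polynomial.X : ℚ[X]) * (egf eulerianPoly - 1) * (1 - egf blockPoly) =
      derivative ℚ[X] (egf blockPoly) := by
  have hC : C (Polynomial.X - 1 : ℚ[X]) ≠ 0 := by
    rw [Ne, map_eq_zero_iff _ PowerSeries.C_injective]
    simpa using Polynomial.X_sub_C_ne_zero (1 : ℚ)
  have hexp := exp_mul_exp_eq_exp_add (A := ℚ[X]) 1 (Polynomial.X - 1)
  rw [add_sub_cancel, rescale_one, RingHom.id_apply] at hexp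
  have hA := rescale_exp_mul_egf_eulerianPoly
  have hB := C_mul_egf_blockPoly
  have hB' := congrArg (derivative ℚ[X]) hB
  have hd : derivative ℚ[X] (exp ℚ[X]) = exp ℚ[X] := by
    simpa using derivative_rescale_exp 1
  rw [derivative_C_mul, derivative_sub_C_mul_add_C, hd, derivative_rescale_exp] at hB'
  apply mul_left_cancel₀ hC
  rw [hB']
  rw [← hexp] at hB ⊢
  have hX : (C (Polynomial.X - 1) : PowerSeries ℚ[X]) = C Polynomial.X - 1 := by simp
  rw [hX] at hA hB ⊢
  linear_combination (-C Polynomial.X * (egf eulerianPoly - 1)) * hB -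
    C Polynomial.X * exp ℚ[X] * hA

/-- The Eulerian polynomial as a sum over the number of blocks. -/
lemma X_mul_eulerianPoly_eq_sum {m N : ℕ} (hm : m ≠ 0) (hN : m < N) :
    Polynomial.X * eulerianPoly m =
      ∑ r ∈ range N, egfCoeff m (derivative ℚ[X] (egf blockPoly) * egf blockPoly ^ r) := by
  have hdvd : (PowerSeries.X : PowerSeries ℚ[X]) ^ N ∣ egf blockPoly ^ N :=
    pow_dvd_pow_of_dvd (PowerSeries.X_dvd_iff.2 (by simp [egf, blockPoly])) N
  rw [← egfCoeff_sum, ← mul_sum, ← egf_eulerianPoly_mul_one_sub, mul_assoc, mul_neg_geom_sum,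
    egfCoeff, mul_sub, map_sub,
    PowerSeries.X_pow_dvd_iff.1 (hdvd.mul_left _) m hN, sub_zero, mul_one,
    PowerSeries.coeff_C_mul, map_sub, PowerSeries.coeff_one, if_neg hm, sub_zero, mul_left_comm]
  exact congrArg _ (egfCoeff_egf m eulerianPoly).symm

end GeneratingFunctions

section Counting

/-- The decorated ordered set partitions of `Fin (m + 1)` into `len` blocks with `0` in the first
block: a partition is encoded by the map sending an element to the index of its block. -/
def blockMaps (m k len : ℕ) : Finset ((_ : Fin (m + 1) → Fin len) × (Fin len → ℕ)) :=
  ({f : Fin (m + 1) → Fin len | (f 0 : ℕ) = 0} : Finset _).sigma fun f =>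
    {s ∈ Fintype.piFinset fun i => Icc 1 (#{x | f x = i} - 1) | ∑ i, s i = k}

lemma mem_blockMaps {m k len : ℕ} {x : (_ : Fin (m + 1) → Fin len) × (Fin len → ℕ)} :
    x ∈ blockMaps m k len ↔ (x.1 0 : ℕ) = 0 ∧
      (∀ i, 1 ≤ x.2 i ∧ x.2 i ≤ #{y | x.1 y = i} - 1) ∧ ∑ i, x.2 i = k := by
  simp [blockMaps]

lemma card_blockMaps (m k r : ℕ) :
    (#(blockMaps m k (r + 1)) : ℚ) = (egfCoeff m
      (PowerSeries.derivative _ (egf blockPoly) * egf blockPoly ^ r)).coeff k := by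
  rw [← sum_prod_egfCoeff_fiber_of_apply_zero, Polynomial.finsetSum_coeff, blockMaps, card_sigma,
    Nat.cast_sum]
  refine sum_congr rfl fun f _ => ?_
  simp only [egfCoeff_egf, blockPoly]
  rw [prod_univ_sum, Polynomial.finsetSum_coeff, card_filter, Nat.cast_sum]
  refine sum_congr rfl fun s _ => ?_
  rw [prod_pow_eq_pow_sum, Polynomial.coeff_X_pow]
  simp [eq_comm]

namespace DOSP

variable {n k : ℕ}

/-- The index of the block containing a given element. -/
noncomputable def blockIndex (D : DOSP n k) (x : Fin n) : Fin D.len :=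
  (D.blocks_cover x).choose

lemma mem_S_iff (D : DOSP n k) (x : Fin n) (i : Fin D.len) : x ∈ D.S i ↔ D.blockIndex x = i := by
  have hx : x ∈ D.S (D.blockIndex x) := (D.blocks_cover x).choose_spec
  refine ⟨fun h => ?_, fun h => h ▸ hx⟩
  by_contra hne
  exact disjoint_left.1 (D.blocks_disjoint _ _ hne) hx h

lemma S_eq (D : DOSP n k) (i : Fin D.len) : D.S i = ({x | D.blockIndex x = i} : Finset _) := by
  ext x
  simp [D.mem_S_iff]

lemma len_le (D : DOSP n k) : D.len ≤ n := by
  have h : Function.Surjective D.blockIndex := fun i =>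
    (D.blocks_nonempty i).imp fun x hx => (D.mem_S_iff x i).1 hx
  simpa using Fintype.card_le_of_surjective _ h

/-- The decorated ordered set partition with given block indices and weights. -/
def ofBlockMap {m len : ℕ} (f : Fin (m + 1) → Fin len) (s : Fin len → ℕ)
    (hs : ∀ i, 1 ≤ s i ∧ s i ≤ #{y | f y = i} - 1) (hk : ∑ i, s i = k) : DOSP (m + 1) k where
  len := len
  len_pos := (f 0).pos
  S i := {x | f x = i}
  wt := s
  blocks_nonempty i := card_pos.1 (by have := hs i; omega)
  blocks_disjoint i j hij := disjoint_filter.2 fun x _ hi hj => hij (hi.symm.trans hj)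
  blocks_cover x := ⟨f x, by simp⟩
  wt_lower i := (hs i).1
  wt_upper i := (hs i).2
  wt_sum := hk

lemma blockIndex_ofBlockMap {m len : ℕ} (f : Fin (m + 1) → Fin len) (s : Fin len → ℕ)
    (hs : ∀ i, 1 ≤ s i ∧ s i ≤ #{y | f y = i} - 1) (hk : ∑ i, s i = k) :
    (ofBlockMap f s hs hk).blockIndex = f := by
  ext1 x
  exact ((ofBlockMap f s hs hk).mem_S_iff x (f x)).1 (by simp [ofBlockMap])

lemma wt_bounds (D : DOSP n k) (i : Fin D.len) :
    1 ≤ D.wt i ∧ D.wt i ≤ #{y | D.blockIndex y = i} - 1 :=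
  ⟨D.wt_lower i, D.S_eq i ▸ D.wt_upper i⟩

lemma ofBlockMap_blockIndex {m : ℕ} (D : DOSP (m + 1) k)
    (hs : ∀ i, 1 ≤ D.wt i ∧ D.wt i ≤ #{y | D.blockIndex y = i} - 1) :
    ofBlockMap D.blockIndex D.wt hs D.wt_sum = D := by
  have hS := funext D.S_eq
  cases D
  simpa [ofBlockMap] using hS.symm

/-- Decorated ordered set partitions with `0` in the first block correspond to their encodings. -/
noncomputable def equivBlockMaps (m k : ℕ) :
    {D : DOSP (m + 1) k // 0 ∈ D.S ⟨0, D.len_pos⟩ ∧ 2 ≤ D.len} ≃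
      ((Icc 2 (m + 1)).sigma fun len => blockMaps m k len) where
  toFun D := ⟨⟨D.1.len, D.1.blockIndex, D.1.wt⟩, by
    obtain ⟨D, h0, h2⟩ := D
    rw [mem_sigma, mem_Icc, mem_blockMaps]
    exact ⟨⟨h2, D.len_le⟩, by simp [(D.mem_S_iff _ _).1 h0], D.wt_bounds, D.wt_sum⟩⟩
  invFun x := by
    have h := mem_sigma.1 x.2
    rw [mem_Icc, mem_blockMaps] at h
    exact ⟨ofBlockMap x.1.2.1 x.1.2.2 h.2.2.1 h.2.2.2, by
      simpa [ofBlockMap, Fin.ext_iff] using ⟨h.2.1, h.1.1⟩⟩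
  left_inv D := Subtype.ext (D.1.ofBlockMap_blockIndex D.1.wt_bounds)
  right_inv x := by
    have h := mem_sigma.1 x.2
    rw [mem_Icc, mem_blockMaps] at h
    have hx := blockIndex_ofBlockMap x.1.2.1 x.1.2.2 h.2.2.1 h.2.2.2
    exact Subtype.ext (Sigma.ext rfl (heq_of_eq (Sigma.ext hx HEq.rfl)))

end DOSP

lemma card_descentCount_eq (m k : ℕ) :
    (Nat.card {σ : Equiv.Perm (Fin m) // descentCount σ = k} : ℚ) = (eulerianPoly m).coeff k := by
  rw [Nat.card_eq_fintype_card, Fintype.card_subtype, card_filter, Nat.cast_sum, eulerianPoly,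
    Polynomial.finsetSum_coeff]
  refine sum_congr rfl fun σ _ => ?_
  simp [Polynomial.coeff_X_pow, eq_comm]

end Counting

/-- the number of decorated ordered set partitions of type `Δ_{k,n}`
with `1 ∈ S_1` and at least two blocks equals `A_{k−1,n−1} − 1`, where
`A_{k−1,n−1}` is the number of permutations of `{1,…,n−1}` with exactly `k−1`
descents; i.e. there are exactly `A_{k−1,n−1} − 1` hypersimplicial blades of
type `Δ_{k,n}`. -/
theorem stmt10 {n k : ℕ} (hn : 2 ≤ n) (hk1 : 1 ≤ k) (hk2 : k ≤ n - 1) :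
    Nat.card {D : DOSP n k //
        (⟨0, by omega⟩ : Fin n) ∈ D.S ⟨0, D.len_pos⟩ ∧ 2 ≤ D.len} =
      Nat.card {σ : Equiv.Perm (Fin (n - 1)) //
        (univ.filter fun i : Fin (n - 1) =>
          ∃ j : Fin (n - 1), (j : ℕ) = (i : ℕ) + 1 ∧ σ j < σ i).card = k - 1} - 1 := by
  obtain ⟨m, rfl⟩ : ∃ m, n = m + 1 := ⟨n - 1, by omega⟩
  obtain ⟨k, rfl⟩ : ∃ l, k = l + 1 := ⟨k - 1, by omega⟩
  refine Nat.eq_sub_of_add_eq ?_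
  change Nat.card {D : DOSP (m + 1) (k + 1) // 0 ∈ D.S ⟨0, D.len_pos⟩ ∧ 2 ≤ D.len} + 1 =
    Nat.card {σ : Equiv.Perm (Fin m) // descentCount σ = k}
  have hsum := congrArg (fun p => Polynomial.coeff p (k + 1))
    (X_mul_eulerianPoly_eq_sum (m := m) (by omega) m.lt_succ_self)
  simp only [Polynomial.coeff_X_mul, Polynomial.finsetSum_coeff, ← card_blockMaps] at hsum
  rw [← card_descentCount_eq, ← Nat.cast_sum, Nat.cast_inj, sum_range_succ'] at hsum
  have hfirst : #(blockMaps m (k + 1) (0 + 1)) = 1 := by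
    have h := card_blockMaps m (k + 1) 0
    rw [pow_zero, mul_one, ← egfCoeff_succ, egfCoeff_egf, blockPoly, Polynomial.finsetSum_coeff]
      at h
    simp only [Polynomial.coeff_X_pow, sum_ite_eq, mem_Icc] at h
    rw [if_pos (by omega)] at h
    exact_mod_cast h
  rw [hsum, hfirst, Nat.card_congr (DOSP.equivBlockMaps m (k + 1)), Nat.card_eq_fintype_card,
    Fintype.card_coe, card_sigma, ← Ico_add_one_right_eq_Icc, sum_Ico_eq_sum_range]
  congr 1
  exact sum_congr (by simp) fun r _ => by rw [add_comm 2]
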